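/- Let G1 be a connected k1-regular finite simple graph on n1 vertices with k1 even, and let G2 be a finite simple graph (not necessarily connected) whose maximum degree is at most k2 and whose minimum degree is at least 1. If k1²/2 ≥ k2 and k1, k2 are not both equal to 2, then the Cartesian product G1 × G2 is antimagic. -/

import Mathlib

/-- The vertex sum at `v` under an edge labeling `f`: the sum of the labels of all
edges incident with `v`. -/
noncomputable def vertexSum {V : Type*} [Finite V] (G : SimpleGraph V)
    (f : Sym2 V → ℕ) (v : V) : ℕ :=
  ∑ e ∈ (G.incidenceSet v).toFinite.toFinset, f e

/-- A graph is antimagic if there is a bijection from its edge set to `{1, ..., m}`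
(`m` = number of edges) such that all vertex sums are pairwise distinct. -/
def IsAntimagic {V : Type*} [Finite V] (G : SimpleGraph V) : Prop :=
  ∃ f : Sym2 V → ℕ,
    Set.BijOn f G.edgeSet (Set.Icc 1 (Nat.card G.edgeSet)) ∧
    ∀ u v : V, u ≠ v → vertexSum G f u ≠ vertexSum G f v

/-!
Number the edges of `G₁` along an Eulerian circuit and permute the labels so that any two
consecutive ones have almost the same sum; then the vertex sums in `G₁` differ by at most `k₁`.
In `G₁ □ G₂`, give the smallest labels to the copies of `G₂`, so that for a fixed `v` in `G₂` the
labels of these edges contribute almost the same amount to all vertices `(u, v)`, and label the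
copies of `G₁` one after the other, in increasing order of that contribution. Passing to the next
copy of `G₁` raises its labels by enough to outweigh both variations, while within one copy the
vertex sums are distinct because the labels in the copies of `G₂` increase with the vertex sums
in `G₁`.
-/

section EdgeIndexing

variable {V : Type*} {G : SimpleGraph V} {m : ℕ}

/-- The labels of an edge labeling `ε` with values in `{0, ..., m - 1}`, as a function on all of
`Sym2 V` (the domain required by `vertexSum`); pairs that are not edges get the value `0`. -/
noncomputable def edgeIndex (ε : G.edgeSet ≃ Fin m) : Sym2 V → ℕ :=
  Function.extend Subtype.val (fun e => (ε e : ℕ)) 0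

lemma edgeIndex_coe (ε : G.edgeSet ≃ Fin m) (e : G.edgeSet) : edgeIndex ε e = ε e :=
  Subtype.val_injective.extend_apply _ _ e

lemma bijOn_edgeIndex_add_one (ε : G.edgeSet ≃ Fin m) :
    Set.BijOn (fun e => edgeIndex ε e + 1) G.edgeSet (Set.Icc 1 m) := by
  refine ⟨fun e he => ?_, fun e he e' he' h => ?_, fun i hi => ?_⟩
  · have := edgeIndex_coe ε ⟨e, he⟩
    grind
  · have hval : (ε ⟨e, he⟩ : ℕ) = ε ⟨e', he'⟩ := by
      simpa only [← edgeIndex_coe, add_left_inj] using h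
    exact congrArg Subtype.val (ε.injective (Fin.ext hval))
  · obtain ⟨h1, hm⟩ := hi
    refine ⟨ε.symm ⟨i - 1, by lia⟩, Subtype.prop _, ?_⟩
    simp only [edgeIndex_coe, Equiv.apply_symm_apply]
    lia

variable [Finite V]

lemma vertexSum_eq_sum_neighborFinset [G.LocallyFinite] (f : Sym2 V → ℕ) (v : V) :
    vertexSum G f v = ∑ w ∈ G.neighborFinset v, f s(v, w) := by
  symm
  refine Finset.sum_bij (fun w _ => s(v, w)) (fun w hw => ?_)
    (fun w _ w' _ h => Sym2.congr_right.1 h) (fun e he => ?_) (fun _ _ => rfl)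
  · simpa using hw
  · obtain ⟨hadj, w, rfl⟩ := (Set.Finite.mem_toFinset _).1 he
    exact ⟨w, by simpa using hadj, rfl⟩

lemma vertexSum_eq_sum_equiv [DecidableEq V] {ι : Type*} [Fintype ι] (e : ι ≃ G.edgeSet)
    (f : Sym2 V → ℕ) (v : V) :
    vertexSum G f v = ∑ i, if v ∈ (e i : Sym2 V) then f (e i) else 0 := by
  rw [← Finset.sum_filter]
  symm
  refine Finset.sum_bij (fun i _ => e i) (fun i hi => ?_)
    (fun i _ i' _ h => e.injective (Subtype.ext h)) (fun x hx => ?_) (fun _ _ => rfl)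
  · exact (Set.Finite.mem_toFinset _).2 ⟨(e i).2, (Finset.mem_filter.1 hi).2⟩
  · obtain ⟨hedge, hv⟩ := (Set.Finite.mem_toFinset _).1 hx
    exact ⟨e.symm ⟨x, hedge⟩, by simpa using hv, by simp⟩

lemma vertexSum_add_one [G.LocallyFinite] (f : Sym2 V → ℕ) (v : V) :
    vertexSum G (fun e => f e + 1) v = vertexSum G f v + G.degree v := by
  simp only [vertexSum_eq_sum_neighborFinset, Finset.sum_add_distrib, Finset.sum_const, smul_eq_mul,
    mul_one, SimpleGraph.card_neighborFinset_eq_degree]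

theorem isAntimagic_of_injective [G.LocallyFinite] (ε : G.edgeSet ≃ Fin m)
    (hinj : Function.Injective fun v => vertexSum G (edgeIndex ε) v + G.degree v) :
    IsAntimagic G := by
  refine ⟨fun e => edgeIndex ε e + 1, ?_, fun u v huv => ?_⟩
  · rw [Nat.card_eq_of_equiv_fin ε]
    exact bijOn_edgeIndex_add_one ε
  · rw [vertexSum_add_one, vertexSum_add_one]
    exact hinj.ne huv

end EdgeIndexing

section EulerianCircuit

variable {V : Type*} {G : SimpleGraph V} {u v x : V}

lemma mem_edges_of_forall_isTrail_length_le {p : G.Walk u v} (hp : p.IsTrail)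
    (hmax : ∀ (w : V) (q : G.Walk w v), q.IsTrail → q.length ≤ p.length) {w : V}
    (hadj : G.Adj u w) : s(u, w) ∈ p.edges := by
  by_contra hmem
  have hle := hmax w (.cons hadj.symm p) <| by
    rw [SimpleGraph.Walk.isTrail_cons, Sym2.eq_swap]
    exact ⟨hp, hmem⟩
  rw [SimpleGraph.Walk.length_cons] at hle
  lia

lemma countP_mem_edges_eq_degree [DecidableEq V] [G.LocallyFinite] {p : G.Walk u v}
    (hp : p.IsTrail) (hx : ∀ w, G.Adj x w → s(x, w) ∈ p.edges) :
    p.edges.countP (x ∈ ·) = G.degree x := by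
  rw [← G.card_incidenceFinset_eq_degree, List.countP_eq_length_filter,
    ← List.toFinset_card_of_nodup (hp.edges_nodup.filter _)]
  congr 1
  ext e
  simp only [List.mem_toFinset, List.mem_filter, decide_eq_true_eq,
    SimpleGraph.mem_incidenceFinset]
  refine ⟨fun ⟨he, hxe⟩ => ⟨p.edges_subset_edgeSet he, hxe⟩, ?_⟩
  rintro ⟨hadj, w, rfl⟩
  exact ⟨hx w hadj, Sym2.mem_mk_left x w⟩

lemma isEulerian_of_forall_mem_support [DecidableEq V] (hG : G.Preconnected) {p : G.Walk u v}
    (hp : p.IsTrail) (hloc : ∀ x ∈ p.support, ∀ w, G.Adj x w → s(x, w) ∈ p.edges) :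
    p.IsEulerian := by
  have hsupp (x : V) : x ∈ p.support := by
    by_contra hx
    obtain ⟨q⟩ := hG u x
    obtain ⟨d, -, hfst, hsnd⟩ :=
      q.exists_boundary_dart {y | y ∈ p.support} p.start_mem_support hx
    exact hsnd (p.snd_mem_support_of_mem_edges (hloc _ hfst _ d.adj))
  refine hp.isEulerian_of_forall_mem fun e he => ?_
  induction e with
  | _ x y => exact hloc x (hsupp x) y he

/- A longest trail contains all edges at its starting point, so by parity it is closed; then it may
be rotated to start at any of its vertices. -/
theorem exists_isEulerian_of_even_degree [DecidableEq V] [Finite G.edgeSet] [G.LocallyFinite]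
    (hG : G.Connected) (heven : ∀ v, Even (G.degree v)) :
    ∃ (u : V) (p : G.Walk u u), p.IsEulerian := by
  have := hG.nonempty
  obtain ⟨u, v, p, hp, hmax⟩ := SimpleGraph.Walk.exists_isTrail_forall_isTrail_length_le_length G
  have hclosed : u = v := by
    by_contra huv
    have hcount : Even (p.edges.countP (u ∈ ·)) := by
      rw [countP_mem_edges_eq_degree hp fun w =>
        mem_edges_of_forall_isTrail_length_le hp fun w q => hmax w v q]
      exact heven u
    exact ((hp.even_countP_edges_iff u).1 hcount huv).1 rfl
  subst hclosed
  refine ⟨u, p, isEulerian_of_forall_mem_support hG.preconnected hp fun x hx w hadj => ?_⟩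
  have hrotate : s(x, w) ∈ (p.rotate x hx).edges :=
    mem_edges_of_forall_isTrail_length_le (hp.rotate hx)
      (fun y q hq => by simpa using hmax y x q hq) hadj
  exact (p.rotate_edges x hx).mem_iff.1 hrotate

/-- The edges of a graph, numbered in the order in which an Eulerian walk traverses them. -/
def eulerianEdgeEquiv [DecidableEq V] {p : G.Walk u v} (hp : p.IsEulerian) :
    Fin p.length ≃ G.edgeSet :=
  (finCongr p.length_edges.symm).trans <|
    (hp.isTrail.edges_nodup.getEquiv p.edges).trans <|
      Equiv.subtypeEquivRight fun _ => hp.mem_edges_iff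

lemma coe_eulerianEdgeEquiv [DecidableEq V] {p : G.Walk u v} (hp : p.IsEulerian)
    (j : Fin p.length) :
    (eulerianEdgeEquiv hp j : Sym2 V) = s(p.getVert j, p.getVert (j + 1)) := by
  simp [eulerianEdgeEquiv, List.Nodup.getEquiv, SimpleGraph.Walk.getElem_edges]

lemma val_finRotate {m : ℕ} (j : Fin m) :
    (finRotate m j : ℕ) = if j.val + 1 = m then 0 else j.val + 1 := by
  cases m with
  | zero => exact j.elim0
  | succ m => simp only [coe_finRotate, Fin.ext_iff, Fin.val_last, add_left_inj]

lemma getVert_finRotate (p : G.Walk u u) (j : Fin p.length) :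
    p.getVert (finRotate p.length j) = p.getVert (j + 1) := by
  rw [val_finRotate]
  split_ifs with hlast
  · rw [hlast, p.getVert_zero, p.getVert_length]
  · rfl

theorem vertexSum_eq_sum_consecutive [Finite V] [DecidableEq V] {p : G.Walk u u}
    (hp : p.IsEulerian) (f : Sym2 V → ℕ) (v : V) :
    vertexSum G f v = ∑ j : Fin p.length with p.getVert (j.val + 1) = v,
      (f (eulerianEdgeEquiv hp j) + f (eulerianEdgeEquiv hp (finRotate _ j))) := by
  let g (j : Fin p.length) : ℕ := f (eulerianEdgeEquiv hp j)
  have hends (j : Fin p.length) : (if v ∈ (eulerianEdgeEquiv hp j : Sym2 V) then g j else 0) =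
      (if p.getVert (j + 1) = v then g j else 0) + if p.getVert j = v then g j else 0 := by
    have hne : p.getVert j ≠ p.getVert (j + 1) := (p.adj_getVert_succ j.2).ne
    simp only [coe_eulerianEdgeEquiv, Sym2.mem_iff]
    grind
  have hrotate : (∑ j : Fin p.length, if p.getVert j = v then g j else 0) =
      ∑ j : Fin p.length, if p.getVert (j + 1) = v then g (finRotate _ j) else 0 := by
    rw [← Equiv.sum_comp (finRotate p.length)]
    simp only [getVert_finRotate]
  rw [vertexSum_eq_sum_equiv (eulerianEdgeEquiv hp), Finset.sum_congr rfl fun j _ => hends j,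
    Finset.sum_add_distrib, hrotate, Finset.sum_filter, ← Finset.sum_add_distrib]
  refine Finset.sum_congr rfl fun j _ => ?_
  split_ifs <;> rfl

end EulerianCircuit

section Zigzag

lemma zigzag_involutive (m : ℕ) : Function.Involutive
    fun j : Fin m => if Even (min j j.rev : ℕ) then j else j.rev := by
  intro j
  grind [Fin.rev_rev]

/-- The permutation of `{0, ..., m - 1}` exchanging `j` and `m - 1 - j` whenever the smaller of the
two is odd. It reads `0, m - 2, 2, m - 4, 4, ...`, so that cyclically consecutive values have
almost constant sum. -/
def zigzag (m : ℕ) : Equiv.Perm (Fin m) := (zigzag_involutive m).toPerm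

lemma val_zigzag {m : ℕ} (j : Fin m) :
    (zigzag m j : ℕ) = if min j.val (m - 1 - j) % 2 = 0 then j.val else m - 1 - j := by
  change ((if Even (min j j.rev : ℕ) then j else j.rev : Fin m) : ℕ) = _
  simp only [apply_ite Fin.val, Fin.val_rev, Nat.even_iff, Nat.sub_sub, add_comm]

lemma zigzag_add_zigzag_finRotate {m : ℕ} (j : Fin m) :
    m ≤ (zigzag m j : ℕ) + zigzag m (finRotate m j) + 2 ∧
      (zigzag m j : ℕ) + zigzag m (finRotate m j) ≤ m := by
  have hj := j.2
  rw [val_zigzag, val_zigzag, val_finRotate]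
  split_ifs <;> lia

end Zigzag

section BalancedLabeling

variable {V : Type*} [Finite V] {G : SimpleGraph V} [G.LocallyFinite]

/- Number the edges along an Eulerian circuit and relabel them by `zigzag`: every passage of the
circuit through `v` contributes two consecutive labels, hence between `m - 2` and `m`. -/
theorem exists_balanced_edgeIndex (hG : G.Connected) (heven : ∀ v, Even (G.degree v)) :
    ∃ (m : ℕ) (ε : G.edgeSet ≃ Fin m), ∀ v,
      G.degree v * m ≤ 2 * (vertexSum G (edgeIndex ε) v + G.degree v) ∧
        2 * vertexSum G (edgeIndex ε) v ≤ G.degree v * m := by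
  classical
  obtain ⟨u, p, hp⟩ := exists_isEulerian_of_even_degree hG heven
  let ε : G.edgeSet ≃ Fin p.length := (eulerianEdgeEquiv hp).symm.trans (zigzag p.length)
  have hlabel (j : Fin p.length) : edgeIndex ε (eulerianEdgeEquiv hp j) = zigzag p.length j := by
    simp [edgeIndex_coe, ε]
  refine ⟨p.length, ε, fun v => ?_⟩
  let passages : Finset (Fin p.length) := {j | p.getVert (j.val + 1) = v}
  have hdegree : G.degree v = 2 * passages.card := by
    have h := vertexSum_eq_sum_consecutive hp (fun _ => 1) v
    rw [vertexSum_eq_sum_neighborFinset] at h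
    simpa [passages, mul_comm] using h
  have hsum : vertexSum G (edgeIndex ε) v = ∑ j ∈ passages,
      ((zigzag p.length j : ℕ) + zigzag p.length (finRotate _ j)) := by
    simp only [vertexSum_eq_sum_consecutive hp, hlabel, passages]
  have hlower := passages.sum_le_sum fun j _ => (zigzag_add_zigzag_finRotate j).1
  have hupper := passages.sum_le_sum fun j _ => (zigzag_add_zigzag_finRotate j).2
  simp only [Finset.sum_add_distrib, Finset.sum_const, smul_eq_mul] at hlower hupper hsum
  rw [hdegree, hsum, mul_assoc]
  lia

end BalancedLabeling

section BoxProdEdges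

variable {V₁ V₂ : Type*} {G₁ : SimpleGraph V₁} {G₂ : SimpleGraph V₂}

lemma boxProdEdge_bijective : Function.Bijective
    (Sum.elim (fun x => (G₁.boxProdRight G₂ x.2).mapEdgeSet x.1)
      (fun x => (G₁.boxProdLeft G₂ x.1).mapEdgeSet x.2) :
      (G₂.edgeSet × V₁) ⊕ (V₂ × G₁.edgeSet) → (G₁ □ G₂).edgeSet) := by
  constructor
  · refine Function.Injective.sumElim ?_ ?_ ?_
    · rintro ⟨⟨⟨v, w⟩, h⟩, u⟩ ⟨⟨⟨v', w'⟩, h'⟩, u'⟩ heq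
      have heq : s((u, v), (u, w)) = s((u', v'), (u', w')) := congrArg Subtype.val heq
      change ((⟨s(v, w), h⟩ : G₂.edgeSet), u) = (⟨s(v', w'), h'⟩, u')
      grind
    · rintro ⟨v, ⟨⟨u, w⟩, h⟩⟩ ⟨v', ⟨⟨u', w'⟩, h'⟩⟩ heq
      have heq : s((u, v), (w, v)) = s((u', v'), (w', v')) := congrArg Subtype.val heq
      change (v, (⟨s(u, w), h⟩ : G₁.edgeSet)) = (v', ⟨s(u', w'), h'⟩)
      grind
    · rintro ⟨⟨⟨v, w⟩, h⟩, u⟩ ⟨v', ⟨⟨u', w'⟩, h'⟩⟩ heq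
      have heq : s((u, v), (u, w)) = s((u', v'), (w', v')) := congrArg Subtype.val heq
      have hne : u' ≠ w' := SimpleGraph.Adj.ne h'
      grind
  · rintro ⟨⟨⟨u, v⟩, ⟨u', v'⟩⟩, h⟩
    obtain ⟨hadj, rfl : v = v'⟩ | ⟨hadj, rfl : u = u'⟩ := SimpleGraph.boxProd_adj.1 h
    · exact ⟨.inr (v, ⟨s(u, u'), hadj⟩), rfl⟩
    · exact ⟨.inl (⟨s(v, v'), hadj⟩, u), rfl⟩

/-- An edge of the box product is an edge of one factor together with a vertex of the other. -/
noncomputable def boxProdEdgeEquiv :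
    (G₂.edgeSet × V₁) ⊕ (V₂ × G₁.edgeSet) ≃ (G₁ □ G₂).edgeSet :=
  Equiv.ofBijective _ boxProdEdge_bijective

variable {n m M N : ℕ}

/-- The edge labeling of the box product that first labels the copies of `G₂` (in blocks of size
`n`, one for each edge of `G₂`), and then the copies of `G₁` one after the other in the order
`σ`. -/
noncomputable def boxProdLabeling (ρ : V₁ ≃ Fin n) (σ : V₂ ≃ Fin N) (ε₁ : G₁.edgeSet ≃ Fin m)
    (ε₂ : G₂.edgeSet ≃ Fin M) : (G₁ □ G₂).edgeSet ≃ Fin (M * n + N * m) :=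
  boxProdEdgeEquiv.symm.trans <|
    (Equiv.sumCongr ((ε₂.prodCongr ρ).trans finProdFinEquiv)
      ((σ.prodCongr ε₁).trans finProdFinEquiv)).trans finSumFinEquiv

variable (ρ : V₁ ≃ Fin n) (σ : V₂ ≃ Fin N) (ε₁ : G₁.edgeSet ≃ Fin m) (ε₂ : G₂.edgeSet ≃ Fin M)

lemma edgeIndex_boxProdLabeling_right (u : V₁) {v w : V₂} (h : G₂.Adj v w) :
    edgeIndex (boxProdLabeling ρ σ ε₁ ε₂) s((u, v), (u, w)) =
      ρ u + n * edgeIndex ε₂ s(v, w) := by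
  let e : G₂.edgeSet := ⟨s(v, w), h⟩
  have hedge : s((u, v), (u, w)) = (boxProdEdgeEquiv (.inl (e, u)) : (G₁ □ G₂).edgeSet) := rfl
  rw [hedge, edgeIndex_coe, edgeIndex_coe ε₂ e]
  simp [boxProdLabeling]

lemma edgeIndex_boxProdLabeling_left (v : V₂) {u w : V₁} (h : G₁.Adj u w) :
    edgeIndex (boxProdLabeling ρ σ ε₁ ε₂) s((u, v), (w, v)) =
      M * n + (edgeIndex ε₁ s(u, w) + m * σ v) := by
  let e : G₁.edgeSet := ⟨s(u, w), h⟩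
  have hedge : s((u, v), (w, v)) = (boxProdEdgeEquiv (.inr (v, e)) : (G₁ □ G₂).edgeSet) := rfl
  rw [hedge, edgeIndex_coe, edgeIndex_coe ε₁ e]
  simp [boxProdLabeling]

theorem vertexSum_boxProdLabeling [Finite V₁] [Finite V₂] [G₁.LocallyFinite] [G₂.LocallyFinite]
    (u : V₁) (v : V₂) :
    vertexSum (G₁ □ G₂) (edgeIndex (boxProdLabeling ρ σ ε₁ ε₂)) (u, v) =
      vertexSum G₁ (edgeIndex ε₁) u + G₁.degree u * (M * n + m * σ v) +
        (n * vertexSum G₂ (edgeIndex ε₂) v + G₂.degree v * ρ u) := by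
  simp only [vertexSum_eq_sum_neighborFinset, SimpleGraph.neighborFinset_boxProd,
    Finset.sum_disjUnion, Finset.sum_product, Finset.sum_singleton]
  congr 1
  · rw [Finset.sum_congr rfl fun w hw => edgeIndex_boxProdLabeling_left ρ σ ε₁ ε₂ v
      ((G₁.mem_neighborFinset u w).1 hw)]
    simp only [Finset.sum_add_distrib, Finset.sum_const, smul_eq_mul,
      SimpleGraph.card_neighborFinset_eq_degree]
    ring
  · rw [Finset.sum_congr rfl fun w hw => edgeIndex_boxProdLabeling_right ρ σ ε₁ ε₂ u
      ((G₂.mem_neighborFinset v w).1 hw)]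
    simp only [Finset.sum_add_distrib, Finset.sum_const, smul_eq_mul, ← Finset.mul_sum,
      SimpleGraph.card_neighborFinset_eq_degree]
    ring

end BoxProdEdges

section BoxProdAntimagic

lemma exists_equiv_fin_monotone {V α : Type*} [Fintype V] [LinearOrder α] (s : V → α) :
    ∃ ρ : V ≃ Fin (Fintype.card V), ∀ x y, ρ x < ρ y → s x ≤ s y := by
  let e := Fintype.equivFin V
  refine ⟨e.trans (Tuple.sort (s ∘ e.symm)).symm, fun x y hxy => ?_⟩
  simpa using Tuple.monotone_sort (s ∘ e.symm) hxy.le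

lemma injective_of_lt_of_lt {α β γ ι κ : Type*} [Preorder γ] [LinearOrder ι] [LinearOrder κ]
    {f : α × β → γ} {ρ : α → ι} {σ : β → κ} (hρ : ρ.Injective) (hσ : σ.Injective)
    (hsnd : ∀ a a' b b', σ b < σ b' → f (a, b) < f (a', b'))
    (hfst : ∀ a a' b, ρ a < ρ a' → f (a, b) < f (a', b)) : f.Injective := by
  rintro ⟨a, b⟩ ⟨a', b'⟩ heq
  rcases lt_trichotomy (σ b) (σ b') with hb | hb | hb
  · exact absurd heq (hsnd a a' b b' hb).ne
  · obtain rfl := hσ hb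
    rcases lt_trichotomy (ρ a) (ρ a') with ha | ha | ha
    · exact absurd heq (hfst a a' b ha).ne
    · rw [hρ ha]
    · exact absurd heq (hfst a' a b ha).ne'
  · exact absurd heq (hsnd a' a b' b hb).ne'

variable {V₁ V₂ : Type*} {G₁ : SimpleGraph V₁} {G₂ : SimpleGraph V₂}

/- Ordering `V₂` by the contribution of the `G₂`-edges separates the vertex sums of the copies of
`G₁`; ordering `V₁` by the vertex sums in `G₁` makes them increase within one copy. -/
theorem isAntimagic_boxProd_of_vertexSum_le_add [Fintype V₁] [Finite V₂] [G₁.LocallyFinite]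
    [G₂.LocallyFinite] {k m D : ℕ} (hreg : G₁.IsRegularOfDegree k) (ε₁ : G₁.edgeSet ≃ Fin m)
    (hD : ∀ u u', vertexSum G₁ (edgeIndex ε₁) u ≤ vertexSum G₁ (edgeIndex ε₁) u' + D)
    (hpos : ∀ v, 0 < G₂.degree v)
    (hlt : ∀ v, D + G₂.degree v * (Fintype.card V₁ - 1) < k * m) :
    IsAntimagic (G₁ □ G₂) := by
  have := Fintype.ofFinite V₂
  let ε₂ := Finite.equivFin G₂.edgeSet
  obtain ⟨ρ, hρ⟩ := exists_equiv_fin_monotone (vertexSum G₁ (edgeIndex ε₁))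
  obtain ⟨σ, hσ⟩ := exists_equiv_fin_monotone fun v =>
    Fintype.card V₁ * vertexSum G₂ (edgeIndex ε₂) v + G₂.degree v
  refine isAntimagic_of_injective (boxProdLabeling ρ σ ε₁ ε₂)
    (injective_of_lt_of_lt ρ.injective σ.injective (fun u u' v v' hv => ?_) fun u u' v hu => ?_)
  · have hshift : k * (m * σ v) + k * m ≤ k * (m * σ v') := by
      rw [← mul_add, ← mul_add_one]
      gcongr
      exact hv
    have hrank : G₂.degree v * ρ u ≤ G₂.degree v * (Fintype.card V₁ - 1) := by
      gcongr
      exact Nat.le_sub_one_of_lt (ρ u).2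
    have := hD u u'
    have := hlt v
    have := hσ v v' hv
    simp only [vertexSum_boxProdLabeling, SimpleGraph.degree_boxProd, hreg.degree_eq, mul_add]
    omega
  · have hrank : G₂.degree v * ρ u < G₂.degree v * ρ u' := Nat.mul_lt_mul_of_pos_left hu (hpos v)
    have := hρ u u' hu
    simp only [vertexSum_boxProdLabeling, SimpleGraph.degree_boxProd, hreg.degree_eq]
    lia

end BoxProdAntimagic

lemma two_mul_add_mul_lt {n k d : ℕ} (hkn : k < n) (hd : 1 ≤ d) (hdk : d ≤ k ^ 2 / 2)
    (hk : k = 2 → d = 1) : 2 * (k + d * (n - 1)) < n * k ^ 2 := by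
  have hk2 : 2 ≤ k := by
    by_contra! hlt
    interval_cases k <;> lia
  obtain rfl | hk3 := hk2.eq_or_lt
  · rw [hk rfl]
    lia
  · obtain ⟨n, rfl⟩ := Nat.exists_eq_add_one.2 (Nat.zero_lt_of_lt hkn)
    calc 2 * (k + d * n) = 2 * k + 2 * d * n := by ring
      _ < k ^ 2 + k ^ 2 * n := by
        refine Nat.add_lt_add_of_lt_of_le (by nlinarith) (Nat.mul_le_mul_right n ?_)
        lia
      _ = (n + 1) * k ^ 2 := by ring

lemma card_neighborSet_lt_card {V : Type*} [Finite V] (G : SimpleGraph V) (v : V) :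
    Nat.card (G.neighborSet v) < Nat.card V := by
  have := Fintype.ofFinite V
  classical
  rw [Nat.card_eq_fintype_card, Nat.card_eq_fintype_card, SimpleGraph.card_neighborSet_eq_degree]
  exact G.degree_lt_card_verts v

/- As `G₁` has `n₁ * k₁ / 2` edges, the labels in its copies make a vertex sum grow by
`n₁ * k₁ ^ 2 / 2` from one copy to the next; `hmax` says that this exceeds the variation within a
copy. -/
theorem boxProd_antimagic_even_connected_general {V₁ V₂ : Type*} [Finite V₁] [Finite V₂]
    {n₁ k₁ : ℕ} (G₁ : SimpleGraph V₁) (G₂ : SimpleGraph V₂) (hn₁ : Nat.card V₁ = n₁)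
    (hreg : ∀ v : V₁, Nat.card (G₁.neighborSet v) = k₁)
    (heven : Even k₁) (hconn : G₁.Connected)
    (hmin : ∀ v : V₂, 1 ≤ Nat.card (G₂.neighborSet v))
    (hmax : ∀ v : V₂, 2 * (k₁ + Nat.card (G₂.neighborSet v) * (n₁ - 1)) < n₁ * k₁ ^ 2) :
    IsAntimagic (G₁ □ G₂) := by
  classical
  have := Fintype.ofFinite V₁
  have := Fintype.ofFinite V₂
  simp only [Nat.card_eq_fintype_card, SimpleGraph.card_neighborSet_eq_degree] at hn₁ hreg hmin hmax
  subst hn₁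
  obtain ⟨m, ε, hε⟩ := exists_balanced_edgeIndex hconn fun v => by rwa [hreg]
  simp only [hreg] at hε
  have hedges : Fintype.card V₁ * k₁ = 2 * m := by
    have hm : G₁.edgeFinset.card = m := by
      rw [← Nat.card_eq_of_equiv_fin ε, Nat.card_eq_fintype_card, SimpleGraph.edgeFinset_card]
    simpa [hreg, hm] using G₁.sum_degrees_eq_twice_card_edges
  refine isAntimagic_boxProd_of_vertexSum_le_add hreg ε (D := k₁) (fun u u' => ?_) hmin fun v => ?_
  · have := (hε u).2
    have := (hε u').1
    lia
  · have := hmax v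
    rw [pow_two, ← mul_assoc, hedges] at this
    lia

/-- If `G₁` is a connected `k₁`-regular graph with `k₁` even, `G₂` has maximum degree
at most `k₂` and minimum degree at least `1`, `k₁²/2 ≥ k₂`, and `k₁, k₂` are not both
equal to `2`, then the Cartesian product `G₁ □ G₂` is antimagic. -/
theorem boxProd_antimagic_even_connected {V₁ V₂ : Type} [Finite V₁] [Finite V₂]
    {n₁ k₁ k₂ : ℕ} (G₁ : SimpleGraph V₁) (G₂ : SimpleGraph V₂)
    (hn₁ : Nat.card V₁ = n₁)
    (hreg : ∀ v : V₁, Nat.card (G₁.neighborSet v) = k₁)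
    (heven : Even k₁) (hconn : G₁.Connected)
    (hmax : ∀ v : V₂, Nat.card (G₂.neighborSet v) ≤ k₂)
    (hmin : ∀ v : V₂, 1 ≤ Nat.card (G₂.neighborSet v))
    (hineq : k₂ ≤ k₁ ^ 2 / 2) (hnot : ¬(k₁ = 2 ∧ k₂ = 2)) :
    IsAntimagic (G₁ □ G₂) := by
  obtain ⟨u⟩ := hconn.nonempty
  have hlt : k₁ < n₁ := hreg u ▸ hn₁ ▸ card_neighborSet_lt_card G₁ u
  have hdegree (v : V₂) (hk : k₁ = 2) : Nat.card (G₂.neighborSet v) = 1 := by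
    subst hk
    have := hmin v
    have := hmax v
    lia
  exact boxProd_antimagic_even_connected_general G₁ G₂ hn₁ hreg heven hconn hmin fun v =>
    two_mul_add_mul_lt hlt (hmin v) ((hmax v).trans hineq) (hdegree v)
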